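/- Assume Hypothesis 3.1 and the setting of Lemma 3.3, and let Ξ₊(λ) (respectively Ξ₋(λ)) be the spectral shift operators, i.e., the a.e.-defined trace class operator families with 0 ≤ Ξ±(λ) ≤ I± obtained from the exponential Herglotz representation of log(Φ₊(z)) (respectively log(Φ̃₋(z))). Then ξ±(λ) := tr_{H±}(Ξ±(λ)) satisfy 0 ≤ ξ± ∈ L¹(ℝ; dλ), and the representations simplify to log(Φ₊(z)) = ∫_ℝ dλ Ξ₊(λ)(λ − z)⁻¹ and log(Φ̃₋(z)) = −∫_ℝ dλ Ξ₋(λ)(λ − z)⁻¹ for z ∈ ℂ∖ℝ (integrals in the weak sense), with no additive constant and no subtraction of λ(1+λ²)⁻¹. -/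

import Mathlib

/-!
Write `L = K J±`. Pushing `L*` through the inverse in the integral defining the logarithm, together
with `‖(A - iy)⁻¹‖ ≤ 1/y`, gives `|⟪f, log Φ(iy) g⟫| ≤ π ‖L f‖ ‖L g‖ / y` for large `y`. Since
`y Im ((λ - iy)⁻¹ - λ(1 + λ²)⁻¹) → 1`, Fatou's lemma applied to `y` times the imaginary part of the
Herglotz representation at `iy` yields `∫ ⟪f, Ξ(λ) f⟫ dλ ≤ π ‖L f‖²`. Summing over an orthonormal
basis makes `tr Ξ` integrable, because `L` is Hilbert-Schmidt. The Cauchy integral of `Ξ` then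
exists weakly and differs from `log Φ` by a constant; both vanish at `i∞`, so the constant is zero.
-/

open Complex Filter MeasureTheory TopologicalSpace ContinuousLinearMap
open scoped InnerProductSpace Topology

noncomputable section

namespace SpectralShift

variable {H : Type*} [NormedAddCommGroup H] [InnerProductSpace ℂ H] [CompleteSpace H]

/-- The imaginary part `(T - T*)/(2i)` of a bounded operator. -/
def imPart (T : H →L[ℂ] H) : H →L[ℂ] H :=
  ((2 * Complex.I)⁻¹ : ℂ) • (T - ContinuousLinearMap.adjoint T)

/-- An operator-valued Herglotz function: analytic on the open upper half-plane with
nonnegative imaginary part there. -/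
def IsHerglotz (M : ℂ → H →L[ℂ] H) : Prop :=
  DifferentiableOn ℂ M {z : ℂ | 0 < z.im} ∧ ∀ z : ℂ, 0 < z.im → (imPart (M z)).IsPositive

/-- The integrand `(T + iλ)⁻¹ - (1 + iλ)⁻¹ I` in the integral representation of `log T`. -/
def logIntegrand (T : H →L[ℂ] H) (t : ℝ) : H →L[ℂ] H :=
  Ring.inverse (T + ((t : ℂ) * Complex.I) • (1 : H →L[ℂ] H)) -
    (((1 : ℂ) + (t : ℂ) * Complex.I)⁻¹) • (1 : H →L[ℂ] H)

/-- `log T = -i ∫₀^∞ ((T + iλ)⁻¹ - (1 + iλ)⁻¹ I) dλ` as a norm-convergent improper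
Riemann integral, for a dissipative boundedly invertible `T`. -/
def opLog (T : H →L[ℂ] H) : H →L[ℂ] H :=
  limUnder atTop (fun R : ℝ => (-Complex.I) • ∫ t in (0:ℝ)..R, logIntegrand T t)

/-- The logarithm `log S = (log S*)*` of an operator `S` with `-S` dissipative. -/
def opLogAnti (T : H →L[ℂ] H) : H →L[ℂ] H :=
  ContinuousLinearMap.adjoint (opLog (ContinuousLinearMap.adjoint T))

/-- The logarithm of a Herglotz-type operator family on `ℂ ∖ ℝ`, using `log T` in the
upper half-plane and the convention `log S = (log S*)*` in the lower half-plane. -/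
def logHerg (Φ : ℂ → H →L[ℂ] H) (z : ℂ) : H →L[ℂ] H :=
  if 0 < z.im then opLog (Φ z) else opLogAnti (Φ z)

/-- The logarithm of an anti-Herglotz-type operator family on `ℂ ∖ ℝ` (nonpositive
imaginary part in the upper half-plane). -/
def logAntiHerg (Φ : ℂ → H →L[ℂ] H) (z : ℂ) : H →L[ℂ] H :=
  if 0 < z.im then opLogAnti (Φ z) else opLog (Φ z)

/-- Trace class: absolute summability of the diagonal in every Hilbert basis. -/
def IsTraceClass (T : H →L[ℂ] H) : Prop :=
  ∀ (w : Set H) (b : HilbertBasis w ℂ H), Summable fun i => ‖⟪(b i : H), T (b i)⟫_ℂ‖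

/-- The trace, computed in a fixed Hilbert basis (basis-independent for trace
class operators). -/
def trH (T : H →L[ℂ] H) : ℂ :=
  ∑' i, ⟪((exists_hilbertBasis ℂ H).choose_spec.choose i : H),
    T ((exists_hilbertBasis ℂ H).choose_spec.choose i)⟫_ℂ

/-- The trace norm, via duality with bounded operators (the correct value for trace
class operators). -/
def traceNorm (T : H →L[ℂ] H) : ℝ :=
  ⨆ B : {B : H →L[ℂ] H // ‖B‖ ≤ 1}, ‖trH (T * (B : H →L[ℂ] H))‖

/-- Hilbert-Schmidt operators. -/
def IsHilbertSchmidt (K : H →L[ℂ] H) : Prop :=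
  ∀ (w : Set H) (b : HilbertBasis w ℂ H), Summable fun i => ‖K (b i)‖ ^ 2

/-- A (possibly unbounded) self-adjoint operator in `H`: a densely defined symmetric
operator possessing everywhere-defined bounded resolvents at every non-real point. -/
structure SelfAdjointOp (H : Type*) [NormedAddCommGroup H] [InnerProductSpace ℂ H]
    [CompleteSpace H] where
  dom : Submodule ℂ H
  dense_dom : Dense (dom : Set H)
  op : dom →ₗ[ℂ] H
  symmetric : ∀ x y : dom, ⟪op x, (y : H)⟫_ℂ = ⟪(x : H), op y⟫_ℂ
  resolvent : ℂ → H →L[ℂ] H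
  resolvent_mem : ∀ {z : ℂ}, z.im ≠ 0 → ∀ x : H, resolvent z x ∈ dom
  op_resolvent : ∀ {z : ℂ} (hz : z.im ≠ 0) (x : H),
    op ⟨resolvent z x, resolvent_mem hz x⟩ - z • resolvent z x = x
  resolvent_op : ∀ {z : ℂ} (hz : z.im ≠ 0) (x : dom),
    resolvent z (op x - z • (x : H)) = x

/-- `B = A + V` for a bounded operator `V` (with `dom B = dom A`). -/
def IsSumOf (B A : SelfAdjointOp H) (V : H →L[ℂ] H) : Prop :=
  B.dom = A.dom ∧ ∀ (x : H) (hxB : x ∈ B.dom) (hxA : x ∈ A.dom),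
    B.op ⟨x, hxB⟩ = A.op ⟨x, hxA⟩ + V x

/-- `R` is the (bounded, everywhere defined) resolvent `(A - z)⁻¹` of `A` at `z`. -/
def SelfAdjointOp.IsResolventAt (A : SelfAdjointOp H) (z : ℂ) (R : H →L[ℂ] H) : Prop :=
  (∀ x : H, R x ∈ A.dom) ∧
  (∀ (x : H) (hx : R x ∈ A.dom), A.op ⟨R x, hx⟩ - z • R x = x) ∧
  (∀ x : A.dom, R (A.op x - z • (x : H)) = x)

/-- `E` is the projection-valued spectral measure of the self-adjoint operator `A`. -/
def IsSpectralMeasure (A : SelfAdjointOp H) (E : Set ℝ → H →L[ℂ] H) : Prop :=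
  (∀ B : Set ℝ, MeasurableSet B → IsSelfAdjoint (E B)) ∧
  (∀ B C : Set ℝ, MeasurableSet B → MeasurableSet C → E B * E C = E (B ∩ C)) ∧
  (E Set.univ = 1) ∧
  (∀ (f : ℕ → Set ℝ), (∀ n, MeasurableSet (f n)) → Pairwise (Function.onFun Disjoint f) →
    ∀ x : H, HasSum (fun n => E (f n) x) (E (⋃ n, f n) x)) ∧
  ∃ μ : H → Measure ℝ,
    (∀ (f : H) (B : Set ℝ), MeasurableSet B → μ f B = ENNReal.ofReal (⟪f, E B f⟫_ℂ).re) ∧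
    ∀ (z : ℂ), z.im ≠ 0 → ∀ f : H,
      ⟪f, A.resolvent z f⟫_ℂ = ∫ l : ℝ, ((l : ℂ) - z)⁻¹ ∂(μ f)

/-- Invertibility of `T` restricted to the range of the orthogonal projection `P`
(for `T` commuting with `P`), with inverse `S` supported in `ran P`. -/
def InvertibleOn (T P : H →L[ℂ] H) : Prop :=
  ∃ S : H →L[ℂ] H, S * P = S ∧ P * S = S ∧ S * (T * P) = P ∧ (P * T) * S = P

/-- The spectral projection `J₊ = (I + J)/2` onto `H₊` for a self-adjoint unitary `J`. -/
def Jplus (J : H →L[ℂ] H) : H →L[ℂ] H := ((2 : ℂ)⁻¹) • (1 + J)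

/-- The spectral projection `J₋ = (I - J)/2` onto `H₋` for a self-adjoint unitary `J`. -/
def Jminus (J : H →L[ℂ] H) : H →L[ℂ] H := ((2 : ℂ)⁻¹) • (1 - J)

/-- `Φ₊(z) = I + J₊ K* (H₀ - z)⁻¹ K J₊`, the operator on `H` inducing `Φ₊(z)` on `H₊`
(and the identity on `H₋`). -/
def PhiPlus (H0 : SelfAdjointOp H) (J K : H →L[ℂ] H) (z : ℂ) : H →L[ℂ] H :=
  1 + Jplus J * (ContinuousLinearMap.adjoint K * H0.resolvent z * K) * Jplus J

/-- `Φ̃₋(z) = I - J₋ K* (H₊ - z)⁻¹ K J₋`, the operator on `H` inducing `Φ̃₋(z)` on `H₋`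
(and the identity on `H₊`). -/
def PhiMinusT (Hp : SelfAdjointOp H) (J K : H →L[ℂ] H) (z : ℂ) : H →L[ℂ] H :=
  1 - Jminus J * (ContinuousLinearMap.adjoint K * Hp.resolvent z * K) * Jminus J

section Neumann

variable {𝕜 E : Type*} [NontriviallyNormedField 𝕜] [NormedAddCommGroup E] [NormedSpace 𝕜 E]
  {A : E →L[𝕜] E} {c : 𝕜}

lemma isUnit_add_smul_one [CompleteSpace E] (h : ‖A‖ < ‖c‖) :
    IsUnit (A + c • (1 : E →L[𝕜] E)) := by
  have hc : c ∈ resolventSet 𝕜 (-A) := by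
    refine spectrum.mem_resolventSet_of_norm_lt_mul ?_
    rw [norm_neg]
    exact (mul_le_of_le_one_right (norm_nonneg A) norm_id_le).trans_lt h
  rwa [spectrum.mem_resolventSet_iff, Algebra.algebraMap_eq_smul_one, sub_neg_eq_add, add_comm]
    at hc

lemma norm_inverse_add_smul_one_le [CompleteSpace E] (h : ‖A‖ < ‖c‖) :
    ‖Ring.inverse (A + c • (1 : E →L[𝕜] E))‖ ≤ (‖c‖ - ‖A‖)⁻¹ := by
  refine opNorm_le_bound _ (inv_nonneg.2 (sub_nonneg.2 h.le)) fun x => ?_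
  set y := Ring.inverse (A + c • (1 : E →L[𝕜] E)) x
  have hx : A y + c • y = x :=
    congr($(Ring.mul_inverse_cancel _ (isUnit_add_smul_one h)) x)
  rw [inv_mul_eq_div, le_div_iff₀ (sub_pos.2 h), ← hx]
  calc ‖y‖ * (‖c‖ - ‖A‖) = ‖c • y‖ - ‖A‖ * ‖y‖ := by rw [norm_smul]; ring
    _ ≤ ‖c • y‖ - ‖A y‖ := by gcongr; exact A.le_opNorm y
    _ ≤ ‖A y + c • y‖ := by
      rw [add_comm]
      exact norm_sub_le_norm_add _ _

lemma inverse_mul_add_smul_one_mul {X Y : E →L[𝕜] E} (hXY : IsUnit (X * Y + c • 1))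
    (hYX : IsUnit (Y * X + c • 1)) :
    Ring.inverse (X * Y + c • 1) * X = X * Ring.inverse (Y * X + c • 1) := by
  rw [Ring.inverse_mul_eq_iff_eq_mul _ _ _ hXY, ← mul_assoc,
    Ring.eq_mul_inverse_iff_mul_eq _ _ _ hYX]
  simp only [mul_add, add_mul, mul_assoc, mul_smul_comm, smul_mul_assoc, mul_one, one_mul]

end Neumann

section Logarithm

variable {A L B : H →L[ℂ] H}

lemma norm_one_add_mul_I_sq (t : ℝ) : ‖(1 : ℂ) + t * I‖ ^ 2 = 1 + t ^ 2 := by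
  rw [Complex.sq_norm, Complex.normSq_apply]
  simp [pow_two]

lemma one_le_norm_one_add_mul_I (t : ℝ) : 1 ≤ ‖(1 : ℂ) + t * I‖ := by
  simpa using Complex.abs_re_le_norm ((1 : ℂ) + t * I)

lemma lt_norm_one_add_mul_I {r : ℝ} (hr : r ≤ 1 / 2) (t : ℝ) : r < ‖(1 : ℂ) + t * I‖ := by
  linarith [one_le_norm_one_add_mul_I t]

lemma norm_inverse_add_one_add_mul_I_le (hA : ‖A‖ ≤ 1 / 2) (t : ℝ) :
    ‖Ring.inverse (A + ((1 : ℂ) + t * I) • (1 : H →L[ℂ] H))‖ ≤ 2 * ‖(1 : ℂ) + t * I‖⁻¹ := by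
  have hc := one_le_norm_one_add_mul_I t
  refine (norm_inverse_add_smul_one_le (lt_norm_one_add_mul_I hA t)).trans ?_
  rw [← inv_inv (2 : ℝ), ← mul_inv]
  gcongr
  linarith

lemma logIntegrand_one_add (hA : ‖A‖ ≤ 1 / 2) (t : ℝ) :
    logIntegrand (1 + A) t = -(((1 : ℂ) + t * I)⁻¹ •
      (Ring.inverse (A + ((1 : ℂ) + t * I) • (1 : H →L[ℂ] H)) * A)) := by
  have hc : (1 : ℂ) + t * I ≠ 0 :=
    norm_pos_iff.1 (zero_lt_one.trans_le (one_le_norm_one_add_mul_I t))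
  have hQ := Ring.inverse_mul_cancel _ (isUnit_add_smul_one (lt_norm_one_add_mul_I hA t))
  have hadd : 1 + A + ((t : ℂ) * I) • (1 : H →L[ℂ] H) = A + ((1 : ℂ) + t * I) • 1 := by
    rw [add_smul, one_smul]
    abel
  rw [logIntegrand, hadd]
  generalize (1 : ℂ) + t * I = c at *
  generalize Ring.inverse (A + c • (1 : H →L[ℂ] H)) = Q at *
  rw [mul_add, mul_smul_comm, mul_one] at hQ
  rw [← hQ, smul_add, smul_smul, inv_mul_cancel₀ hc, one_smul]
  abel

lemma continuous_logIntegrand_one_add (hA : ‖A‖ ≤ 1 / 2) : Continuous (logIntegrand (1 + A)) := by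
  have hinv : Continuous fun t : ℝ => Ring.inverse (A + ((1 : ℂ) + t * I) • (1 : H →L[ℂ] H)) := by
    refine continuous_iff_continuousAt.2 fun t => ?_
    obtain ⟨u, hu⟩ := isUnit_add_smul_one (lt_norm_one_add_mul_I hA t)
    have hu_cont := NormedRing.inverse_continuousAt u
    rw [hu] at hu_cont
    exact hu_cont.comp (f := fun t : ℝ => A + ((1 : ℂ) + t * I) • (1 : H →L[ℂ] H)) (by fun_prop)
  have hc : Continuous fun t : ℝ => ((1 : ℂ) + t * I)⁻¹ :=
    Continuous.inv₀ (by fun_prop) fun t =>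
      norm_pos_iff.1 (zero_lt_one.trans_le (one_le_norm_one_add_mul_I t))
  rw [funext (logIntegrand_one_add hA)]
  fun_prop

lemma norm_logIntegrand_one_add_le (hA : ‖A‖ ≤ 1 / 2) (t : ℝ) :
    ‖logIntegrand (1 + A) t‖ ≤ (1 + t ^ 2)⁻¹ := by
  rw [logIntegrand_one_add hA, norm_neg, norm_smul, norm_inv]
  calc _ ≤ ‖(1 : ℂ) + t * I‖⁻¹ * (2 * ‖(1 : ℂ) + t * I‖⁻¹ * (1 / 2)) := by
        grw [norm_mul_le, norm_inverse_add_one_add_mul_I_le hA, hA]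
    _ = (1 + t ^ 2)⁻¹ := by rw [← norm_one_add_mul_I_sq]; ring

lemma integrable_logIntegrand_one_add (hA : ‖A‖ ≤ 1 / 2) : Integrable (logIntegrand (1 + A)) :=
  integrable_inv_one_add_sq.mono' (continuous_logIntegrand_one_add hA).aestronglyMeasurable
    (Eventually.of_forall (norm_logIntegrand_one_add_le hA))

omit [CompleteSpace H] in
lemma opLog_eq_integral {T : H →L[ℂ] H} (hT : IntegrableOn (logIntegrand T) (Set.Ioi 0)) :
    opLog T = (-I) • ∫ t in Set.Ioi (0 : ℝ), logIntegrand T t :=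
  ((intervalIntegral_tendsto_integral_Ioi 0 hT tendsto_id).const_smul (-I)).limUnder_eq

lemma norm_adjoint_mul_mul_le (L B : H →L[ℂ] H) : ‖adjoint L * B * L‖ ≤ ‖L‖ ^ 2 * ‖B‖ := by
  grw [norm_mul_le, norm_mul_le, LinearIsometryEquiv.norm_map]
  exact le_of_eq (by ring)

lemma norm_mul_mul_adjoint_le (L B : H →L[ℂ] H) : ‖B * L * adjoint L‖ ≤ ‖L‖ ^ 2 * ‖B‖ := by
  grw [norm_mul_le, norm_mul_le, LinearIsometryEquiv.norm_map]
  exact le_of_eq (by ring)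

-- Commuting `L*` past the inverse leaves a factor `L` on each side of a bounded operator.
lemma inner_logIntegrand_one_add (hB : ‖L‖ ^ 2 * ‖B‖ ≤ 1 / 2) (t : ℝ) (f g : H) :
    ⟪f, logIntegrand (1 + adjoint L * B * L) t g⟫_ℂ = -(((1 : ℂ) + t * I)⁻¹ *
      ⟪L f, Ring.inverse (B * L * adjoint L + ((1 : ℂ) + t * I) • (1 : H →L[ℂ] H))
        (B (L g))⟫_ℂ) := by
  have hA := (norm_adjoint_mul_mul_le L B).trans hB
  have hA' := (norm_mul_mul_adjoint_le L B).trans hB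
  have hpush := inverse_mul_add_smul_one_mul (X := adjoint L) (Y := B * L)
    (mul_assoc (adjoint L) B L ▸ isUnit_add_smul_one (lt_norm_one_add_mul_I hA t))
    (isUnit_add_smul_one (lt_norm_one_add_mul_I hA' t))
  rw [logIntegrand_one_add hA, mul_assoc, ← mul_assoc (Ring.inverse _), hpush, neg_apply,
    smul_apply, inner_neg_right, inner_smul_right]
  rw [← adjoint_inner_right L]
  rfl

lemma norm_inner_logIntegrand_one_add_le (hB : ‖L‖ ^ 2 * ‖B‖ ≤ 1 / 2) (t : ℝ) (f g : H) :
    ‖⟪f, logIntegrand (1 + adjoint L * B * L) t g⟫_ℂ‖ ≤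
      (1 + t ^ 2)⁻¹ * (2 * ‖B‖ * (‖L f‖ * ‖L g‖)) := by
  have hA' := (norm_mul_mul_adjoint_le L B).trans hB
  rw [inner_logIntegrand_one_add hB, norm_neg, norm_mul, norm_inv]
  calc _ ≤ ‖(1 : ℂ) + t * I‖⁻¹ *
        (‖L f‖ * (2 * ‖(1 : ℂ) + t * I‖⁻¹ * (‖B‖ * ‖L g‖))) := by
        grw [norm_inner_le_norm, le_opNorm _ (B (L g)), norm_inverse_add_one_add_mul_I_le hA',
          B.le_opNorm]
    _ = _ := by rw [← norm_one_add_mul_I_sq]; ring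

lemma norm_inner_opLog_one_add_le (hB : ‖L‖ ^ 2 * ‖B‖ ≤ 1 / 2) (f g : H) :
    ‖⟪f, opLog (1 + adjoint L * B * L) g⟫_ℂ‖ ≤ Real.pi * ‖B‖ * (‖L f‖ * ‖L g‖) := by
  have hint := (integrable_logIntegrand_one_add
    ((norm_adjoint_mul_mul_le L B).trans hB)).integrableOn (s := Set.Ioi 0)
  have hinner : ⟪f, (∫ t in Set.Ioi (0 : ℝ), logIntegrand (1 + adjoint L * B * L) t) g⟫_ℂ =
      ∫ t in Set.Ioi (0 : ℝ), ⟪f, logIntegrand (1 + adjoint L * B * L) t g⟫_ℂ :=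
    (((innerSL ℂ f).comp (apply ℂ H g)).integral_comp_comm hint).symm
  rw [opLog_eq_integral hint, smul_apply, inner_smul_right, norm_mul, norm_neg, norm_I, one_mul,
    hinner]
  calc _ ≤ ∫ t in Set.Ioi (0 : ℝ), (1 + t ^ 2)⁻¹ * (2 * ‖B‖ * (‖L f‖ * ‖L g‖)) :=
        norm_integral_le_of_norm_le (integrable_inv_one_add_sq.integrableOn.mul_const _)
          (Eventually.of_forall fun t => norm_inner_logIntegrand_one_add_le hB t f g)
    _ = Real.pi * ‖B‖ * (‖L f‖ * ‖L g‖) := by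
        rw [integral_mul_const, integral_Ioi_inv_one_add_sq, Real.arctan_zero]
        ring

lemma norm_inner_opLogAnti_one_add_le (hB : ‖L‖ ^ 2 * ‖B‖ ≤ 1 / 2) (f g : H) :
    ‖⟪f, opLogAnti (1 + adjoint L * B * L) g⟫_ℂ‖ ≤ Real.pi * ‖B‖ * (‖L f‖ * ‖L g‖) := by
  have hadj : adjoint (1 + adjoint L * B * L) = 1 + adjoint L * adjoint B * L := by
    simp only [← star_eq_adjoint, star_add, star_one, star_mul, star_star, mul_assoc]
  have hB' : ‖adjoint B‖ = ‖B‖ := LinearIsometryEquiv.norm_map _ _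
  rw [opLogAnti, hadj, adjoint_inner_right, norm_inner_symm]
  refine (norm_inner_opLog_one_add_le (by rwa [hB']) g f).trans_eq ?_
  rw [hB', mul_comm ‖L g‖]

end Logarithm

lemma SelfAdjointOp.norm_resolvent_le (A : SelfAdjointOp H) {z : ℂ} (hz : z.im ≠ 0) :
    ‖A.resolvent z‖ ≤ |z.im|⁻¹ := by
  refine opNorm_le_bound _ (by positivity) fun x => ?_
  let u : A.dom := ⟨A.resolvent z x, A.resolvent_mem hz x⟩
  have hu : A.op u - z • (u : H) = x := A.op_resolvent hz x
  have hreal : (⟪(u : H), A.op u⟫_ℂ).im = 0 := by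
    rw [← conj_eq_iff_im, inner_conj_symm]
    exact A.symmetric u u
  have him : (⟪(u : H), x⟫_ℂ).im = -z.im * ‖(u : H)‖ ^ 2 := by
    rw [← hu, inner_sub_right, inner_smul_right, inner_self_eq_norm_sq_to_K, sub_im, hreal]
    simp [← ofReal_pow]
  have hle : |z.im| * ‖(u : H)‖ ^ 2 ≤ ‖(u : H)‖ * ‖x‖ := calc
    |z.im| * ‖(u : H)‖ ^ 2 = |(⟪(u : H), x⟫_ℂ).im| := by
      rw [him, abs_mul, abs_neg, abs_of_nonneg (sq_nonneg ‖(u : H)‖)]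
    _ ≤ ‖⟪(u : H), x⟫_ℂ‖ := abs_im_le_norm _
    _ ≤ ‖(u : H)‖ * ‖x‖ := norm_inner_le_norm _ _
  change ‖(u : H)‖ ≤ _
  rw [inv_mul_eq_div, le_div_iff₀ (abs_pos.2 hz)]
  rcases (norm_nonneg (u : H)).eq_or_lt with h | h
  · rw [← h, zero_mul]
    exact norm_nonneg x
  · nlinarith

section HilbertSchmidt

section RCLike

variable {𝕜 E F ι κ : Type*} [RCLike 𝕜] [NormedAddCommGroup E] [InnerProductSpace 𝕜 E]
  [NormedAddCommGroup F] [InnerProductSpace 𝕜 F]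

lemma countable_of_orthonormal [SeparableSpace E] {v : ι → E} (hv : Orthonormal 𝕜 v) :
    Countable ι := by
  refine Pairwise.countable_of_isOpen_disjoint (s := fun i => Metric.ball (v i) (1 / 2))
    (fun i j hij => Metric.ball_disjoint_ball ?_) (fun i => Metric.isOpen_ball)
    (fun i => Metric.nonempty_ball.2 one_half_pos)
  have hdist : ‖v i - v j‖ ^ 2 = 2 := by
    rw [norm_sub_sq (𝕜 := 𝕜), hv.inner_eq_zero hij, hv.norm_eq_one, hv.norm_eq_one]
    norm_num
  rw [dist_eq_norm]
  nlinarith [norm_nonneg (v i - v j)]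

lemma tsum_enorm_inner_sq (b : HilbertBasis ι 𝕜 E) (x : E) :
    ∑' i, ‖⟪b i, x⟫_𝕜‖ₑ ^ 2 = ‖x‖ₑ ^ 2 := by
  have h : HasSum (fun i => ‖⟪b i, x⟫_𝕜‖ ^ 2) (‖x‖ ^ 2) := by
    simpa only [← norm_inner_symm x, inner_mul_symm_re_eq_norm, norm_mul, ← pow_two,
      ← inner_self_eq_norm_sq (𝕜 := 𝕜) x] using
      RCLike.hasSum_re 𝕜 (b.hasSum_inner_mul_inner x x)
  simp only [← ofReal_norm, ← ENNReal.ofReal_pow (norm_nonneg _)]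
  rw [← ENNReal.ofReal_tsum_of_nonneg (fun _ => by positivity) h.summable, h.tsum_eq]

lemma tsum_enorm_apply_sq [CompleteSpace E] [CompleteSpace F] (b : HilbertBasis ι 𝕜 E)
    (b' : HilbertBasis κ 𝕜 F) (K : E →L[𝕜] F) :
    ∑' i, ‖K (b i)‖ₑ ^ 2 = ∑' j, ‖adjoint K (b' j)‖ₑ ^ 2 := by
  simp_rw [← tsum_enorm_inner_sq b', ← tsum_enorm_inner_sq b, adjoint_inner_right]
  rw [ENNReal.tsum_comm]
  refine tsum_congr fun j => tsum_congr fun i => ?_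
  rw [← ofReal_norm, norm_inner_symm, ofReal_norm]

end RCLike

lemma summable_norm_sq_iff {ι E : Type*} [SeminormedAddCommGroup E] {f : ι → E} :
    (Summable fun i => ‖f i‖ ^ 2) ↔ ∑' i, ‖f i‖ₑ ^ 2 ≠ ⊤ := by
  have h := tsum_enorm_ne_top_iff_summable_norm (f := fun i => (‖f i‖ ^ 2 : ℝ))
  simpa only [enorm_pow, enorm_norm, norm_pow, norm_norm] using h.symm

variable {K : H →L[ℂ] H}

lemma isHilbertSchmidt_of_hilbertBasis {ι : Type*} (b : HilbertBasis ι ℂ H)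
    (hK : Summable fun i => ‖K (b i)‖ ^ 2) : IsHilbertSchmidt K := fun _ b' => by
  rw [summable_norm_sq_iff] at hK ⊢
  rwa [tsum_enorm_apply_sq b' b, ← tsum_enorm_apply_sq b b]

lemma IsHilbertSchmidt.adjoint (hK : IsHilbertSchmidt K) :
    IsHilbertSchmidt (adjoint K) := fun _ b => by
  have h := hK _ b
  rw [summable_norm_sq_iff] at h ⊢
  rwa [← tsum_enorm_apply_sq b b]

omit [CompleteSpace H] in
lemma IsHilbertSchmidt.mul_left (hK : IsHilbertSchmidt K) (T : H →L[ℂ] H) :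
    IsHilbertSchmidt (T * K) := fun w b => by
  refine ((hK w b).mul_left (‖T‖ ^ 2)).of_nonneg_of_le (fun i => sq_nonneg _) fun i => ?_
  rw [← mul_pow]
  exact pow_le_pow_left₀ (norm_nonneg _) (T.le_opNorm _) 2

lemma IsHilbertSchmidt.mul_right (hK : IsHilbertSchmidt K) (T : H →L[ℂ] H) :
    IsHilbertSchmidt (K * T) := by
  have h := (hK.adjoint.mul_left (ContinuousLinearMap.adjoint T)).adjoint
  rwa [← star_eq_adjoint, ← star_eq_adjoint, ← star_eq_adjoint, star_mul, star_star,
    star_star] at h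

end HilbertSchmidt

section TraceClass

variable {T : H →L[ℂ] H}

lemma isTraceClass_of_isPositive {ι : Type*} (b : HilbertBasis ι ℂ H) (hT : T.IsPositive)
    (hsum : Summable fun i => ‖⟪b i, T (b i)⟫_ℂ‖) : IsTraceClass T := by
  have hsqrt : ∀ x, ‖⟪x, T x⟫_ℂ‖ = ‖CFC.sqrt T x‖ ^ 2 := fun x => by
    have hS : (CFC.sqrt T).IsPositive := (nonneg_iff_isPositive _).1 (CFC.sqrt_nonneg T)
    have hTx : T x = CFC.sqrt T (CFC.sqrt T x) :=
      congr($((CFC.sqrt_mul_sqrt_self T ((nonneg_iff_isPositive T).2 hT)).symm) x)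
    rw [hTx, ← adjoint_inner_left, hS.isSelfAdjoint.adjoint_eq, inner_self_eq_norm_sq_to_K,
      norm_pow, RCLike.norm_ofReal, abs_norm]
  simp only [hsqrt] at hsum
  intro w b'
  simpa only [hsqrt] using isHilbertSchmidt_of_hilbertBasis b hsum w b'

lemma exists_hilbertBasis_trH_eq_tsum (H : Type*) [NormedAddCommGroup H] [InnerProductSpace ℂ H]
    [CompleteSpace H] : ∃ (w : Set H) (b : HilbertBasis w ℂ H),
    ∀ T : H →L[ℂ] H, trH T = ∑' i, ⟪b i, T (b i)⟫_ℂ :=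
  ⟨_, (exists_hilbertBasis ℂ H).choose_spec.choose, fun _ => rfl⟩

open scoped ComplexOrder in
lemma trH_nonneg (hT : T.IsPositive) : 0 ≤ trH T :=
  tsum_nonneg fun _ => hT.inner_nonneg_right _

end TraceClass

section TraceIntegral

variable {α : Type*} [MeasurableSpace α] {μ : Measure α}

lemma integrable_tsum {ι E : Type*} [Countable ι] [NormedAddCommGroup E] [CompleteSpace E]
    [SecondCountableTopology E] [MeasurableSpace E] [BorelSpace E]
    {f : ι → α → E} (hf : ∀ i, Measurable (f i)) (hsum : ∑' i, ∫⁻ a, ‖f i a‖ₑ ∂μ ≠ ⊤) :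
    Integrable (fun a => ∑' i, f i a) μ := by
  refine ⟨(Measurable.tsum hf).aestronglyMeasurable, ?_⟩
  calc ∫⁻ a, ‖∑' i, f i a‖ₑ ∂μ ≤ ∫⁻ a, ∑' i, ‖f i a‖ₑ ∂μ :=
        lintegral_mono fun a => enorm_tsum_le_tsum_enorm
    _ = ∑' i, ∫⁻ a, ‖f i a‖ₑ ∂μ := lintegral_tsum fun i => (hf i).enorm.aemeasurable
    _ < ⊤ := hsum.lt_top

variable {Ξ : α → H →L[ℂ] H} {L : H →L[ℂ] H} {M : ENNReal}

omit [CompleteSpace H] in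
lemma tsum_lintegral_enorm_inner_ne_top {w : Set H} (b : HilbertBasis w ℂ H)
    (hL : IsHilbertSchmidt L) (hM : M ≠ ⊤)
    (hbound : ∀ f, ∫⁻ a, ‖⟪f, Ξ a f⟫_ℂ‖ₑ ∂μ ≤ M * ‖L f‖ₑ ^ 2) :
    ∑' i, ∫⁻ a, ‖⟪b i, Ξ a (b i)⟫_ℂ‖ₑ ∂μ ≠ ⊤ := by
  refine ne_top_of_le_ne_top ?_ (ENNReal.tsum_le_tsum fun i => hbound (b i))
  rw [ENNReal.tsum_mul_left]
  exact ENNReal.mul_ne_top hM (summable_norm_sq_iff.1 (hL w b))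

variable [SeparableSpace H]

lemma ae_isTraceClass (hmeas : ∀ f, Measurable fun a => ⟪f, Ξ a f⟫_ℂ)
    (hpos : ∀ᵐ a ∂μ, (Ξ a).IsPositive) (hL : IsHilbertSchmidt L) (hM : M ≠ ⊤)
    (hbound : ∀ f, ∫⁻ a, ‖⟪f, Ξ a f⟫_ℂ‖ₑ ∂μ ≤ M * ‖L f‖ₑ ^ 2) :
    ∀ᵐ a ∂μ, IsTraceClass (Ξ a) := by
  obtain ⟨w, b, -⟩ := exists_hilbertBasis ℂ H
  have := countable_of_orthonormal b.orthonormal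
  have hsum := tsum_lintegral_enorm_inner_ne_top b hL hM hbound
  simp only [← eLpNorm_one_eq_lintegral_enorm] at hsum
  filter_upwards [hpos, summable_norm_of_tsum_eLpNorm_ne_top le_rfl
    (fun i => (hmeas (b i)).aestronglyMeasurable) hsum] with a ha hsum_a
  exact isTraceClass_of_isPositive b ha hsum_a

lemma integrable_trH (hmeas : ∀ f, Measurable fun a => ⟪f, Ξ a f⟫_ℂ)
    (hL : IsHilbertSchmidt L) (hM : M ≠ ⊤)
    (hbound : ∀ f, ∫⁻ a, ‖⟪f, Ξ a f⟫_ℂ‖ₑ ∂μ ≤ M * ‖L f‖ₑ ^ 2) :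
    Integrable (fun a => trH (Ξ a)) μ := by
  obtain ⟨w, b, htr⟩ := exists_hilbertBasis_trH_eq_tsum H
  have := countable_of_orthonormal b.orthonormal
  simp only [htr]
  exact integrable_tsum (fun i => hmeas (b i)) (tsum_lintegral_enorm_inner_ne_top b hL hM hbound)

end TraceIntegral

section HerglotzKernel

/-- The kernel `(λ - z)⁻¹ - λ(1 + λ²)⁻¹` of the Herglotz (Nevanlinna) representation. -/
def herglotzKernel (z : ℂ) (l : ℝ) : ℂ := ((l : ℂ) - z)⁻¹ - (l : ℂ) * ((1 : ℂ) + (l : ℂ) ^ 2)⁻¹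

lemma herglotzKernel_ofReal_mul_I_im (y l : ℝ) :
    (herglotzKernel (y * I) l).im = y / (l ^ 2 + y ^ 2) := by
  have hreal : (l : ℂ) * ((1 : ℂ) + (l : ℂ) ^ 2)⁻¹ = (l * (1 + l ^ 2)⁻¹ : ℝ) := by push_cast; rfl
  rw [herglotzKernel, hreal, sub_im, ofReal_im, inv_im, normSq_apply]
  simp [pow_two]

lemma tendsto_mul_herglotzKernel_im (l : ℝ) :
    Tendsto (fun y : ℝ => y * (herglotzKernel (y * I) l).im) atTop (𝓝 1) := by
  have hlim : Tendsto (fun y : ℝ => (1 + (l / y) ^ 2)⁻¹) atTop (𝓝 (1 + 0 ^ 2)⁻¹) :=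
    (((tendsto_const_nhds.div_atTop tendsto_id).pow 2).const_add 1).inv₀ (by norm_num)
  rw [zero_pow two_ne_zero, add_zero, inv_one] at hlim
  refine hlim.congr' ?_
  filter_upwards [eventually_gt_atTop 0] with y hy
  have hne : l ^ 2 + y ^ 2 ≠ 0 := by positivity
  rw [herglotzKernel_ofReal_mul_I_im, div_pow, inv_eq_one_div, mul_div_assoc',
    div_eq_div_iff (by positivity) hne]
  field_simp
  ring

lemma measurable_herglotzKernel (z : ℂ) : Measurable (herglotzKernel z) := by
  unfold herglotzKernel
  fun_prop

open scoped ComplexOrder in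
lemma tendsto_ofReal_mul_herglotzKernel_mul_im {w : ℂ} (hw : 0 ≤ w) (l : ℝ) :
    Tendsto (fun y : ℝ => ENNReal.ofReal (y * (herglotzKernel (y * I) l * w).im)) atTop
      (𝓝 ‖w‖ₑ) := by
  rw [← ofReal_norm, eq_coe_norm_of_nonneg hw]
  simpa only [im_mul_ofReal, mul_assoc, norm_real, norm_norm, one_mul] using
    ENNReal.tendsto_ofReal ((tendsto_mul_herglotzKernel_im l).mul_const ‖w‖)

open scoped ComplexOrder in
lemma lintegral_enorm_le_of_herglotzKernel {k : ℝ → ℂ} {M : ℝ} (hmeas : AEMeasurable k)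
    (hk : ∀ᵐ l, 0 ≤ k l)
    (hint : ∀ᶠ y : ℝ in atTop, Integrable fun l => herglotzKernel (y * I) l * k l)
    (hbound : ∀ᶠ y : ℝ in atTop, y * (∫ l, herglotzKernel (y * I) l * k l).im ≤ M) :
    ∫⁻ l, ‖k l‖ₑ ≤ ENNReal.ofReal M := by
  have hfatou : ∀ᵐ l, ‖k l‖ₑ = liminf (fun y : ℝ =>
      ENNReal.ofReal (y * (herglotzKernel (y * I) l * k l).im)) atTop := by
    filter_upwards [hk] with l hl
    exact (tendsto_ofReal_mul_herglotzKernel_mul_im hl l).liminf_eq.symm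
  have hle : ∀ᶠ y : ℝ in atTop, ∫⁻ l, ENNReal.ofReal (y * (herglotzKernel (y * I) l * k l).im) ≤
      ENNReal.ofReal M := by
    filter_upwards [hint, hbound, eventually_gt_atTop 0] with y hy_int hy_bound hy
    have hnonneg : ∀ᵐ l, 0 ≤ y * (herglotzKernel (y * I) l * k l).im := by
      filter_upwards [hk] with l hl
      rw [eq_coe_norm_of_nonneg hl, im_mul_ofReal, herglotzKernel_ofReal_mul_I_im]
      positivity
    refine (ofReal_integral_eq_lintegral_ofReal (hy_int.im.const_mul y) hnonneg).symm.trans_le ?_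
    rw [integral_const_mul, integral_im hy_int]
    exact ENNReal.ofReal_le_ofReal hy_bound
  rw [lintegral_congr_ae hfatou]
  refine (lintegral_liminf_le' fun y => ?_).trans (liminf_le_of_frequently_le' hle.frequently)
  exact ((((measurable_herglotzKernel _).aemeasurable.mul hmeas).im).const_mul y).ennreal_ofReal

variable {k : ℝ → ℂ} {z : ℂ}

lemma norm_inv_ofReal_sub_le (hz : z.im ≠ 0) (l : ℝ) : ‖((l : ℂ) - z)⁻¹‖ ≤ |z.im|⁻¹ := by
  rw [norm_inv]
  refine inv_anti₀ (abs_pos.2 hz) ?_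
  simpa using abs_im_le_norm ((l : ℂ) - z)

lemma integrable_inv_ofReal_sub_mul (hk : Integrable k) (hz : z.im ≠ 0) :
    Integrable fun l : ℝ => ((l : ℂ) - z)⁻¹ * k l :=
  hk.bdd_mul (Measurable.aestronglyMeasurable (by fun_prop))
    (Eventually.of_forall (norm_inv_ofReal_sub_le hz))

lemma tendsto_integral_inv_ofReal_sub_mul (hk : Integrable k) :
    Tendsto (fun y : ℝ => ∫ l : ℝ, ((l : ℂ) - y * I)⁻¹ * k l) atTop (𝓝 0) := by
  have hlim : Tendsto (fun y : ℝ => y⁻¹ * ∫ l, ‖k l‖) atTop (𝓝 0) := by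
    simpa using tendsto_inv_atTop_zero.mul_const (∫ l, ‖k l‖)
  refine squeeze_zero_norm' ?_ hlim
  filter_upwards [eventually_gt_atTop 0] with y hy
  have him : ((y : ℂ) * I).im = y := by simp
  have hne : ((y : ℂ) * I).im ≠ 0 := him.symm ▸ hy.ne'
  rw [← integral_const_mul]
  refine norm_integral_le_of_norm_le (hk.norm.const_mul _) (Eventually.of_forall fun l => ?_)
  have hle := norm_inv_ofReal_sub_le hne l
  rw [him, abs_of_pos hy] at hle
  rw [norm_mul]
  gcongr

lemma integrable_mul_inv_one_add_sq_mul (hk : Integrable k) :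
    Integrable fun l : ℝ => (l : ℂ) * ((1 : ℂ) + (l : ℂ) ^ 2)⁻¹ * k l := by
  refine hk.bdd_mul (c := 1) (Measurable.aestronglyMeasurable (by fun_prop))
    (Eventually.of_forall fun l => ?_)
  have hreal : (l : ℂ) * ((1 : ℂ) + (l : ℂ) ^ 2)⁻¹ = (l / (1 + l ^ 2) : ℝ) := by
    push_cast
    rfl
  rw [hreal, norm_real, Real.norm_eq_abs, abs_div, abs_of_pos (by positivity : 0 < 1 + l ^ 2),
    div_le_one (by positivity)]
  nlinarith [sq_abs l, abs_nonneg l]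

lemma integral_herglotzKernel_mul (hk : Integrable k) (hz : z.im ≠ 0) :
    ∫ l, herglotzKernel z l * k l = (∫ l : ℝ, ((l : ℂ) - z)⁻¹ * k l) -
      ∫ l : ℝ, (l : ℂ) * ((1 : ℂ) + (l : ℂ) ^ 2)⁻¹ * k l := by
  simp only [herglotzKernel, sub_mul]
  exact integral_sub (integrable_inv_ofReal_sub_mul hk hz) (integrable_mul_inv_one_add_sq_mul hk)

-- Both the Cauchy integral and `F` vanish at `i∞`, which forces the additive constant to be zero.
lemma eq_integral_inv_ofReal_sub_mul {F : ℂ → ℂ} {c : ℂ} (hk : Integrable k)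
    (hF : ∀ z : ℂ, z.im ≠ 0 → F z = c + ∫ l, herglotzKernel z l * k l)
    (hlim : Tendsto (fun y : ℝ => F (y * I)) atTop (𝓝 0)) (hz : z.im ≠ 0) :
    F z = ∫ l : ℝ, ((l : ℂ) - z)⁻¹ * k l := by
  set d := c - ∫ l : ℝ, (l : ℂ) * ((1 : ℂ) + (l : ℂ) ^ 2)⁻¹ * k l with hd
  have hFd : ∀ z : ℂ, z.im ≠ 0 → F z = d + ∫ l : ℝ, ((l : ℂ) - z)⁻¹ * k l := fun z hz => by
    rw [hF z hz, integral_herglotzKernel_mul hk hz, hd]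
    ring
  have hd0 : d = 0 := by
    refine tendsto_nhds_unique (f := fun _ : ℝ => d) tendsto_const_nhds ?_ (l := atTop)
    have hsub := hlim.sub (tendsto_integral_inv_ofReal_sub_mul hk)
    rw [sub_zero] at hsub
    refine hsub.congr' ?_
    filter_upwards [eventually_gt_atTop 0] with y hy
    rw [hFd _ (by simpa using hy.ne'), add_sub_cancel_right]
  rw [hFd z hz, hd0, zero_add]

end HerglotzKernel

section HerglotzRepresentation

/-- The weak Herglotz representation `G(z) = C + ∫ ((λ - z)⁻¹ - λ(1 + λ²)⁻¹) Ξ(λ) dλ` off the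
real axis, tested on all pairs of vectors. -/
def IsHerglotzRep (G : ℂ → H →L[ℂ] H) (C : H →L[ℂ] H) (Ξ : ℝ → H →L[ℂ] H) : Prop :=
  ∀ z : ℂ, z.im ≠ 0 → ∀ f g : H,
    Integrable (fun l => herglotzKernel z l * ⟪f, Ξ l g⟫_ℂ) ∧
    ⟪f, G z g⟫_ℂ = ⟪f, C g⟫_ℂ + ∫ l, herglotzKernel z l * ⟪f, Ξ l g⟫_ℂ

/-- The weak Cauchy representation `G(z) = ∫ (λ - z)⁻¹ Ξ(λ) dλ` off the real axis, tested on
all pairs of vectors. -/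
def IsCauchyRep (G : ℂ → H →L[ℂ] H) (Ξ : ℝ → H →L[ℂ] H) : Prop :=
  ∀ z : ℂ, z.im ≠ 0 → ∀ f g : H,
    Integrable (fun l : ℝ => ((l : ℂ) - z)⁻¹ * ⟪f, Ξ l g⟫_ℂ) ∧
    ⟪f, G z g⟫_ℂ = ∫ l : ℝ, ((l : ℂ) - z)⁻¹ * ⟪f, Ξ l g⟫_ℂ

/-- Decay `G(iy) = O(1/y)` as `y → ∞` in the sense of sesquilinear forms, with the form bound
`M ‖L f‖ ‖L g‖` that makes the diagonal summable when `L` is Hilbert-Schmidt. -/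
def HasFormDecay (G : ℂ → H →L[ℂ] H) (L : H →L[ℂ] H) (M : ℝ) : Prop :=
  ∀ᶠ y : ℝ in atTop, ∀ f g : H, y * ‖⟪f, G (y * I) g⟫_ℂ‖ ≤ M * (‖L f‖ * ‖L g‖)

lemma integrable_inner_of_diagonal {α : Type*} [MeasurableSpace α] {μ : Measure α}
    {Ξ : α → H →L[ℂ] H} (hdiag : ∀ f, Integrable (fun a => ⟪f, Ξ a f⟫_ℂ) μ) (f g : H) :
    Integrable (fun a => ⟪f, Ξ a g⟫_ℂ) μ := by
  simp only [← adjoint_inner_left] at hdiag ⊢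
  have hpol := fun a => inner_map_polarization (adjoint (Ξ a) : H →ₗ[ℂ] H) g f
  simp only [coe_coe] at hpol
  simp only [hpol]
  exact ((((hdiag _).sub (hdiag _)).add ((hdiag _).const_mul I)).sub
    ((hdiag _).const_mul I)).div_const 4

variable {G : ℂ → H →L[ℂ] H} {C L : H →L[ℂ] H} {Ξ : ℝ → H →L[ℂ] H} {M : ℝ}

omit [CompleteSpace H] in
lemma isHerglotzRep_neg (h : ∀ z : ℂ, z.im ≠ 0 → ∀ f g : H,
    Integrable (fun l => herglotzKernel z l * ⟪f, Ξ l g⟫_ℂ) ∧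
    ⟪f, G z g⟫_ℂ = ⟪f, C g⟫_ℂ - ∫ l, herglotzKernel z l * ⟪f, Ξ l g⟫_ℂ) :
    IsHerglotzRep (fun z => -G z) (-C) Ξ := fun z hz f g => by
  refine ⟨(h z hz f g).1, ?_⟩
  rw [neg_apply, neg_apply, inner_neg_right, inner_neg_right, (h z hz f g).2, neg_sub',
    sub_neg_eq_add]

omit [CompleteSpace H] in
lemma HasFormDecay.neg (h : HasFormDecay G L M) : HasFormDecay (fun z => -G z) L M := by
  simpa only [HasFormDecay, neg_apply, inner_neg_right, norm_neg] using h

omit [CompleteSpace H] in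
lemma HasFormDecay.tendsto_inner (h : HasFormDecay G L M) (f g : H) :
    Tendsto (fun y : ℝ => ⟪f, G (y * I) g⟫_ℂ) atTop (𝓝 0) := by
  refine squeeze_zero_norm' ?_ (tendsto_const_nhds.div_atTop tendsto_id :
    Tendsto (fun y : ℝ => M * (‖L f‖ * ‖L g‖) / y) atTop (𝓝 0))
  filter_upwards [h, eventually_gt_atTop 0] with y hy_bound hy
  rw [le_div_iff₀' hy]
  exact hy_bound f g

lemma IsHerglotzRep.lintegral_enorm_inner_le (hrep : IsHerglotzRep G C Ξ) (hC : IsSelfAdjoint C)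
    (hmeas : ∀ f g, Measurable fun l => ⟪f, Ξ l g⟫_ℂ) (hpos : ∀ᵐ l, (Ξ l).IsPositive)
    (hdecay : HasFormDecay G L M) (f : H) :
    ∫⁻ l, ‖⟪f, Ξ l f⟫_ℂ‖ₑ ≤ ENNReal.ofReal M * ‖L f‖ₑ ^ 2 := by
  have hCim : (⟪f, C f⟫_ℂ).im = 0 := by
    simpa using hC.isSymmetric.im_inner_self_apply f
  have him : ∀ y : ℝ, 0 < y → ((y : ℂ) * I).im ≠ 0 := fun y hy => by simpa using hy.ne'
  rw [← ofReal_norm, ← ENNReal.ofReal_pow (norm_nonneg _), ← ENNReal.ofReal_mul' (sq_nonneg _)]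
  refine lintegral_enorm_le_of_herglotzKernel (hmeas f f).aemeasurable
    (hpos.mono fun l hl => hl.inner_nonneg_right f) ?_ ?_
  · filter_upwards [eventually_gt_atTop 0] with y hy
    exact (hrep _ (him y hy) f f).1
  · filter_upwards [hdecay, eventually_gt_atTop 0] with y hy_bound hy
    have hG := congr(($((hrep _ (him y hy) f f).2)).im)
    rw [add_im, hCim, zero_add] at hG
    rw [← hG, pow_two]
    grw [im_le_norm]
    exact hy_bound f f

lemma IsHerglotzRep.isCauchyRep (hrep : IsHerglotzRep G C Ξ) (hC : IsSelfAdjoint C)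
    (hmeas : ∀ f g, Measurable fun l => ⟪f, Ξ l g⟫_ℂ) (hpos : ∀ᵐ l, (Ξ l).IsPositive)
    (hdecay : HasFormDecay G L M) : IsCauchyRep G Ξ := by
  have hint : ∀ f g, Integrable fun l => ⟪f, Ξ l g⟫_ℂ :=
    integrable_inner_of_diagonal fun f => ⟨(hmeas f f).aestronglyMeasurable,
      (hrep.lintegral_enorm_inner_le hC hmeas hpos hdecay f).trans_lt
        (ENNReal.mul_lt_top ENNReal.ofReal_lt_top (ENNReal.pow_lt_top enorm_lt_top))⟩
  exact fun z hz f g => ⟨integrable_inv_ofReal_sub_mul (hint f g) hz,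
    eq_integral_inv_ofReal_sub_mul (F := fun z => ⟪f, G z g⟫_ℂ) (hint f g)
      (fun z hz => (hrep z hz f g).2) (hdecay.tendsto_inner f g) hz⟩

lemma IsHerglotzRep.isTraceClass_and_isCauchyRep [SeparableSpace H]
    (hrep : IsHerglotzRep G C Ξ) (hC : IsSelfAdjoint C)
    (hmeas : ∀ f g, Measurable fun l => ⟪f, Ξ l g⟫_ℂ) (hpos : ∀ᵐ l, (Ξ l).IsPositive)
    (hL : IsHilbertSchmidt L) (hdecay : HasFormDecay G L M) :
    (∀ᵐ l, IsTraceClass (Ξ l)) ∧ Integrable (fun l => trH (Ξ l)) ∧ IsCauchyRep G Ξ :=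
  have hbound := hrep.lintegral_enorm_inner_le hC hmeas hpos hdecay
  ⟨ae_isTraceClass (fun f => hmeas f f) hpos hL ENNReal.ofReal_ne_top hbound,
    integrable_trH (fun f => hmeas f f) hL ENNReal.ofReal_ne_top hbound,
    hrep.isCauchyRep hC hmeas hpos hdecay⟩

end HerglotzRepresentation

section FormDecay

variable {J L : H →L[ℂ] H}

omit [CompleteSpace H] in
lemma eventually_norm_sq_mul_le {B : ℂ → H →L[ℂ] H}
    (hB : ∀ y : ℝ, 0 < y → ‖B (y * I)‖ ≤ y⁻¹) (L : H →L[ℂ] H) :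
    ∀ᶠ y : ℝ in atTop, ‖L‖ ^ 2 * ‖B (y * I)‖ ≤ 1 / 2 := by
  filter_upwards [eventually_gt_atTop 0, eventually_ge_atTop (2 * ‖L‖ ^ 2)] with y hy hLy
  grw [hB y hy, ← div_eq_mul_inv]
  rw [div_le_div_iff₀ hy two_pos]
  linarith

lemma hasFormDecay_logHerg {B : ℂ → H →L[ℂ] H} (hB : ∀ y : ℝ, 0 < y → ‖B (y * I)‖ ≤ y⁻¹) :
    HasFormDecay (logHerg fun z => 1 + adjoint L * B z * L) L Real.pi := by
  filter_upwards [eventually_norm_sq_mul_le hB L, eventually_gt_atTop 0] with y hLB hy f g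
  have him : 0 < ((y : ℂ) * I).im := by simpa using hy
  rw [logHerg, if_pos him]
  grw [norm_inner_opLog_one_add_le hLB, hB y hy]
  exact le_of_eq (by field_simp)

lemma hasFormDecay_logAntiHerg {B : ℂ → H →L[ℂ] H}
    (hB : ∀ y : ℝ, 0 < y → ‖B (y * I)‖ ≤ y⁻¹) :
    HasFormDecay (logAntiHerg fun z => 1 + adjoint L * B z * L) L Real.pi := by
  filter_upwards [eventually_norm_sq_mul_le hB L, eventually_gt_atTop 0] with y hLB hy f g
  have him : 0 < ((y : ℂ) * I).im := by simpa using hy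
  rw [logAntiHerg, if_pos him]
  grw [norm_inner_opLogAnti_one_add_le hLB, hB y hy]
  exact le_of_eq (by field_simp)

lemma SelfAdjointOp.norm_resolvent_mul_I_le (A : SelfAdjointOp H) {y : ℝ} (hy : 0 < y) :
    ‖A.resolvent (y * I)‖ ≤ y⁻¹ := by
  have him : ((y : ℂ) * I).im = y := by simp
  simpa only [him, abs_of_pos hy] using A.norm_resolvent_le (z := y * I) (him.symm ▸ hy.ne')

lemma isSelfAdjoint_Jplus (hJ : IsSelfAdjoint J) : IsSelfAdjoint (Jplus J) := by
  rw [isSelfAdjoint_iff, Jplus, star_smul, star_add, star_one, hJ.star_eq, star_inv₀, star_ofNat]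

lemma isSelfAdjoint_Jminus (hJ : IsSelfAdjoint J) : IsSelfAdjoint (Jminus J) := by
  rw [isSelfAdjoint_iff, Jminus, star_smul, star_sub, star_one, hJ.star_eq, star_inv₀, star_ofNat]

lemma adjoint_mul_of_isSelfAdjoint {P : H →L[ℂ] H} (hP : IsSelfAdjoint P) (K : H →L[ℂ] H) :
    adjoint (K * P) = P * adjoint K := by
  rw [← star_eq_adjoint, star_mul, hP.star_eq, star_eq_adjoint]

lemma PhiPlus_eq (hJ : IsSelfAdjoint J) (A : SelfAdjointOp H) (K : H →L[ℂ] H) :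
    PhiPlus A J K = fun z => 1 + adjoint (K * Jplus J) * A.resolvent z * (K * Jplus J) := by
  funext z
  simp only [PhiPlus, adjoint_mul_of_isSelfAdjoint (isSelfAdjoint_Jplus hJ), mul_assoc]

lemma PhiMinusT_eq (hJ : IsSelfAdjoint J) (A : SelfAdjointOp H) (K : H →L[ℂ] H) :
    PhiMinusT A J K = fun z => 1 + adjoint (K * Jminus J) * -A.resolvent z * (K * Jminus J) := by
  funext z
  simp only [PhiMinusT, adjoint_mul_of_isSelfAdjoint (isSelfAdjoint_Jminus hJ), mul_assoc,
    neg_mul, mul_neg, sub_eq_add_neg]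

lemma hasFormDecay_logHerg_PhiPlus (hJ : IsSelfAdjoint J) (A : SelfAdjointOp H)
    (K : H →L[ℂ] H) : HasFormDecay (logHerg (PhiPlus A J K)) (K * Jplus J) Real.pi := by
  rw [PhiPlus_eq hJ]
  exact hasFormDecay_logHerg fun y hy => A.norm_resolvent_mul_I_le hy

lemma hasFormDecay_logAntiHerg_PhiMinusT (hJ : IsSelfAdjoint J) (A : SelfAdjointOp H)
    (K : H →L[ℂ] H) : HasFormDecay (logAntiHerg (PhiMinusT A J K)) (K * Jminus J) Real.pi := by
  rw [PhiMinusT_eq hJ]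
  exact hasFormDecay_logAntiHerg fun y hy => (norm_neg _).trans_le (A.norm_resolvent_mul_I_le hy)

end FormDecay

theorem simplified_representation_general [SeparableSpace H] (A B : SelfAdjointOp H)
    (J K : H →L[ℂ] H) (hJ : IsSelfAdjoint J) (hK : IsHilbertSchmidt K)
    (Ξp Ξm : ℝ → H →L[ℂ] H) (Cp Cm : H →L[ℂ] H)
    (hCp : IsSelfAdjoint Cp) (hCm : IsSelfAdjoint Cm)
    (hmeasp : ∀ f g : H, Measurable fun l : ℝ => ⟪f, Ξp l g⟫_ℂ)
    (hmeasm : ∀ f g : H, Measurable fun l : ℝ => ⟪f, Ξm l g⟫_ℂ)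
    (hposp : ∀ᵐ l ∂(volume : Measure ℝ), (Ξp l).IsPositive)
    (hposm : ∀ᵐ l ∂(volume : Measure ℝ), (Ξm l).IsPositive)
    (hrepp : IsHerglotzRep (logHerg (PhiPlus A J K)) Cp Ξp)
    (hrepm : IsHerglotzRep (fun z => -logAntiHerg (PhiMinusT B J K) z) (-Cm) Ξm) :
    (∀ᵐ l ∂(volume : Measure ℝ), IsTraceClass (Ξp l) ∧ IsTraceClass (Ξm l)) ∧
    (Integrable (fun l : ℝ => (trH (Ξp l)).re) ∧
     Integrable (fun l : ℝ => (trH (Ξm l)).re) ∧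
     (∀ᵐ l ∂(volume : Measure ℝ), 0 ≤ (trH (Ξp l)).re ∧ (trH (Ξp l)).im = 0 ∧
        0 ≤ (trH (Ξm l)).re ∧ (trH (Ξm l)).im = 0)) ∧
    ∀ z : ℂ, z.im ≠ 0 → ∀ f g : H,
      Integrable (fun l : ℝ => ((l : ℂ) - z)⁻¹ * ⟪f, Ξp l g⟫_ℂ) ∧
      Integrable (fun l : ℝ => ((l : ℂ) - z)⁻¹ * ⟪f, Ξm l g⟫_ℂ) ∧
      ⟪f, logHerg (PhiPlus A J K) z g⟫_ℂ =
        ∫ l : ℝ, ((l : ℂ) - z)⁻¹ * ⟪f, Ξp l g⟫_ℂ ∧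
      ⟪f, logAntiHerg (PhiMinusT B J K) z g⟫_ℂ =
        -∫ l : ℝ, ((l : ℂ) - z)⁻¹ * ⟪f, Ξm l g⟫_ℂ := by
  obtain ⟨htcp, htrp, hcauchyp⟩ := hrepp.isTraceClass_and_isCauchyRep hCp hmeasp hposp
    (hK.mul_right (Jplus J)) (hasFormDecay_logHerg_PhiPlus hJ A K)
  obtain ⟨htcm, htrm, hcauchym⟩ := hrepm.isTraceClass_and_isCauchyRep hCm.neg hmeasm hposm
    (hK.mul_right (Jminus J)) (hasFormDecay_logAntiHerg_PhiMinusT hJ B K).neg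
  refine ⟨htcp.and htcm, ⟨htrp.re, htrm.re, ?_⟩, fun z hz f g => ⟨(hcauchyp z hz f g).1,
    (hcauchym z hz f g).1, (hcauchyp z hz f g).2, ?_⟩⟩
  · filter_upwards [hposp, hposm] with l hlp hlm
    have hp := nonneg_iff.1 (trH_nonneg hlp)
    have hm := nonneg_iff.1 (trH_nonneg hlm)
    exact ⟨hp.1, hp.2.symm, hm.1, hm.2.symm⟩
  · rw [← (hcauchym z hz f g).2, neg_apply, inner_neg_right, neg_neg]

/-- Lemma 3.4: under Hypothesis 3.1 the exponential Herglotz representations of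
`log Φ₊` and `log Φ̃₋` simplify: `ξ± = tr Ξ± ∈ L¹(ℝ)` is nonnegative and
`log Φ₊(z) = ∫ Ξ₊(λ)(λ-z)⁻¹ dλ`, `log Φ̃₋(z) = -∫ Ξ₋(λ)(λ-z)⁻¹ dλ` (weak sense),
with no additive constant and no subtraction of `λ(1+λ²)⁻¹`. -/
theorem simplified_representation [SeparableSpace H]
    (H0 Hp : SelfAdjointOp H) (J K : H →L[ℂ] H)
    (hJ : IsSelfAdjoint J) (hJ2 : J * J = 1) (hK : IsHilbertSchmidt K)
    (hsump : IsSumOf Hp H0 (K * Jplus J * ContinuousLinearMap.adjoint K))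
    (Ξp Ξm : ℝ → H →L[ℂ] H) (Cp Cm : H →L[ℂ] H)
    (hCp : IsSelfAdjoint Cp) (hCm : IsSelfAdjoint Cm)
    (hmeasp : ∀ f g : H, Measurable fun l : ℝ => ⟪f, Ξp l g⟫_ℂ)
    (hmeasm : ∀ f g : H, Measurable fun l : ℝ => ⟪f, Ξm l g⟫_ℂ)
    (hbdp : ∀ᵐ l ∂(volume : Measure ℝ),
      (Ξp l).IsPositive ∧ ((1 : H →L[ℂ] H) - Ξp l).IsPositive ∧ IsTraceClass (Ξp l))
    (hbdm : ∀ᵐ l ∂(volume : Measure ℝ),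
      (Ξm l).IsPositive ∧ ((1 : H →L[ℂ] H) - Ξm l).IsPositive ∧ IsTraceClass (Ξm l))
    (hrepp : ∀ z : ℂ, z.im ≠ 0 → ∀ f g : H,
      Integrable (fun l : ℝ =>
        (((l : ℂ) - z)⁻¹ - (l : ℂ) * ((1 : ℂ) + (l : ℂ) ^ 2)⁻¹) * ⟪f, Ξp l g⟫_ℂ) ∧
      ⟪f, logHerg (PhiPlus H0 J K) z g⟫_ℂ = ⟪f, Cp g⟫_ℂ +
        ∫ l : ℝ, (((l : ℂ) - z)⁻¹ - (l : ℂ) * ((1 : ℂ) + (l : ℂ) ^ 2)⁻¹) * ⟪f, Ξp l g⟫_ℂ)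
    (hrepm : ∀ z : ℂ, z.im ≠ 0 → ∀ f g : H,
      Integrable (fun l : ℝ =>
        (((l : ℂ) - z)⁻¹ - (l : ℂ) * ((1 : ℂ) + (l : ℂ) ^ 2)⁻¹) * ⟪f, Ξm l g⟫_ℂ) ∧
      ⟪f, logAntiHerg (PhiMinusT Hp J K) z g⟫_ℂ = ⟪f, Cm g⟫_ℂ -
        ∫ l : ℝ, (((l : ℂ) - z)⁻¹ - (l : ℂ) * ((1 : ℂ) + (l : ℂ) ^ 2)⁻¹) * ⟪f, Ξm l g⟫_ℂ) :
    (Integrable (fun l : ℝ => (trH (Ξp l)).re) ∧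
     Integrable (fun l : ℝ => (trH (Ξm l)).re) ∧
     (∀ᵐ l ∂(volume : Measure ℝ), 0 ≤ (trH (Ξp l)).re ∧ (trH (Ξp l)).im = 0 ∧
        0 ≤ (trH (Ξm l)).re ∧ (trH (Ξm l)).im = 0)) ∧
    ∀ z : ℂ, z.im ≠ 0 → ∀ f g : H,
      Integrable (fun l : ℝ => ((l : ℂ) - z)⁻¹ * ⟪f, Ξp l g⟫_ℂ) ∧
      Integrable (fun l : ℝ => ((l : ℂ) - z)⁻¹ * ⟪f, Ξm l g⟫_ℂ) ∧
      ⟪f, logHerg (PhiPlus H0 J K) z g⟫_ℂ =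
        ∫ l : ℝ, ((l : ℂ) - z)⁻¹ * ⟪f, Ξp l g⟫_ℂ ∧
      ⟪f, logAntiHerg (PhiMinusT Hp J K) z g⟫_ℂ =
        -∫ l : ℝ, ((l : ℂ) - z)⁻¹ * ⟪f, Ξm l g⟫_ℂ := by
  exact (simplified_representation_general H0 Hp J K hJ hK Ξp Ξm Cp Cm hCp hCm hmeasp hmeasm
    (hbdp.mono fun _ h => h.1) (hbdm.mono fun _ h => h.1) hrepp (isHerglotzRep_neg hrepm)).2

end SpectralShift
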